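/- Let χ be an irreducible character of a finite group G with K = ker(χ). If K is not contained in the Fitting subgroup F(G) of G, then there exists an irreducible character ξ of G such that ker(ξ) < K (strict containment) and cod(ξ) > cod(χ). -/

import Mathlib

open CategoryTheory

/-- The kernel of (the character of) a finite-dimensional complex representation. -/
noncomputable def charKer {G : Type} [Group G] (V : FDRep ℂ G) : Subgroup G :=
  MonoidHom.ker (Representation.asGroupHom V.ρ)

/-- The codegree of a character: `|G : ker χ| / χ(1)`. -/
noncomputable def codeg {G : Type} [Group G] (V : FDRep ℂ G) : ℕ :=
  (charKer V).index / Module.finrank ℂ V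

/-- The set of codegrees of irreducible characters of `G`. -/
def codSet (G : Type) [Group G] : Set ℕ :=
  {n | ∃ V : FDRep ℂ G, Simple V ∧ codeg V = n}

/-- Inner product of class functions on a finite group. -/
noncomputable def innerChar (G : Type) [Group G] (f g : G → ℂ) : ℂ :=
  (∑ᶠ x : G, f x * starRingEnd ℂ (g x)) / Nat.card G

open scoped Classical in
/-- The induced character `θ^G` of a character `θ` of a subgroup `H ≤ G`. -/
noncomputable def indChar {G : Type} [Group G] (H : Subgroup G) (θ : FDRep ℂ ↥H) : G → ℂ :=
  fun g => (∑ᶠ x : G, if h : x * g * x⁻¹ ∈ H then θ.character ⟨x * g * x⁻¹, h⟩ else 0) /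
    Nat.card ↥H


/-- Elementary irreducibility. -/
def ElIrr {G V : Type} [Group G] [AddCommGroup V] [Module ℂ V] (ρ : Representation ℂ G V) : Prop :=
  Nontrivial V ∧ ∀ S : Submodule ℂ V, (∀ g, ∀ v ∈ S, ρ g v ∈ S) → S = ⊥ ∨ S = ⊤

theorem ElIrr.finrank_sq_le {G V : Type} [Group G] [Finite G] [AddCommGroup V] [Module ℂ V]
    [FiniteDimensional ℂ V] {ρ : Representation ℂ G V} (h : ElIrr ρ) :
    Module.finrank ℂ V * Module.finrank ℂ V ≤ Nat.card (Set.range ρ) := by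
  classical
  obtain ⟨hn, h⟩ := h
  let A := Algebra.adjoin ℂ (Set.range ρ)
  have hmem : ∀ g, ρ g ∈ A := fun g => Algebra.subset_adjoin ⟨g, rfl⟩
  have : IsSimpleModule A V := by
    rw [isSimpleModule_iff]
    refine { exists_pair_ne := ⟨⊥, ⊤, bot_ne_top⟩, eq_bot_or_eq_top := fun S => ?_ }
    rcases h (S.restrictScalars ℂ) (fun g v hv => S.smul_mem (⟨ρ g, hmem g⟩ : A) hv) with h | h
    · left; simpa using h
    · right; simpa using h
  have hsc := IsSimpleModule.algebraMap_end_bijective_of_isAlgClosed (A := A) (V := V) ℂ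
  have htop : A = ⊤ := by
    rw [eq_top_iff]
    intro f _
    let f' : Module.End (Module.End A V) V :=
      { toFun := f
        map_add' := map_add f
        map_smul' := by
          intro c v
          obtain ⟨z, rfl⟩ := hsc.2 c
          simp }
    obtain ⟨a, ha⟩ := jacobson_density f' (Finset.univ.image (Module.finBasis ℂ V))
    have : f = a := by
      apply (Module.finBasis ℂ V).ext
      intro i
      exact ha _ (by simp)
    rw [this]; exact a.2
  have hspan : Submodule.span ℂ (Set.range ρ) = ⊤ := by
    have h1 := Algebra.adjoin_eq_span ℂ (Set.range ρ)
    have h2 : (Submonoid.closure (Set.range ρ) : Set (Module.End ℂ V)) = Set.range ρ := by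
      rw [← MonoidHom.coe_mrange, Submonoid.closure_eq]
    rw [h2] at h1
    rw [← h1]
    change Subalgebra.toSubmodule A = ⊤
    rw [htop]; simp
  have := Fintype.ofFinite (Set.range ρ)
  have h3 := finrank_span_le_card (R := ℂ) (Set.range ρ)
  rw [hspan, finrank_top, Module.finrank_linearMap] at h3
  rwa [Nat.card_eq_fintype_card, ← Set.toFinset_card]

theorem elIrr_of_simple {G : Type} [Group G] (χ : FDRep ℂ G) (hχ : Simple χ) : ElIrr χ.ρ := by
  constructor
  · by_contra hc
    rw [not_nontrivial_iff_subsingleton] at hc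
    apply id_nonzero χ
    ext x
    exact Subsingleton.elim (α := χ) _ _
  · intro S hS
    let σ : Representation ℂ G S :=
      { toFun := fun g => (χ.ρ g).restrict (hS g)
        map_one' := by ext; simp
        map_mul' := by intros; ext; simp }
    let i : FDRep.of σ ⟶ χ := ⟨FGModuleCat.ofHom S.subtype, fun g => by ext x; rfl⟩
    have : Mono i := by
      apply (Action.forget (FGModuleCat ℂ) G ⋙ forget (FGModuleCat ℂ)).mono_of_mono_map
      rw [mono_iff_injective]
      exact Subtype.val_injective
    by_cases h0 : i = 0
    · left
      rw [eq_bot_iff]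
      intro v hv
      have := congrArg (fun f : FDRep.of σ ⟶ χ => f.hom.hom (⟨v, hv⟩ : S)) h0
      exact this
    · right
      have := isIso_of_mono_of_nonzero h0
      rw [eq_top_iff]
      intro v _
      have h1 : inv i ≫ i = 𝟙 χ := by simp
      have := congrArg (fun f : χ ⟶ χ => f.hom.hom v) h1
      have h2 : (((inv i).hom.hom v : S) : χ) = v := this
      rw [← h2]
      exact Subtype.property _

theorem simple_of_elIrr {G V : Type} [Group G] [AddCommGroup V] [Module ℂ V]
    [FiniteDimensional ℂ V] {ρ : Representation ℂ G V} (h : ElIrr ρ) : Simple (FDRep.of ρ) := by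
  obtain ⟨hn, h⟩ := h
  constructor
  intro Y f hf
  constructor
  · rintro hi rfl
    obtain ⟨v, hv⟩ := exists_ne (0 : V)
    have h1 : inv (0 : Y ⟶ FDRep.of ρ) ≫ 0 = 𝟙 (FDRep.of ρ) := IsIso.inv_hom_id _
    rw [Limits.comp_zero] at h1
    have := congrArg (fun f : FDRep.of ρ ⟶ FDRep.of ρ => f.hom.hom v) h1
    exact hv this.symm
  · intro h0
    have hinj : Function.Injective (f.hom.hom : Y → V) := by
      have h1 : Mono f.hom := (Action.forget (FGModuleCat ℂ) G).map_mono f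
      have h2 := (forget₂ (FGModuleCat ℂ) (ModuleCat ℂ)).map_mono f.hom
      rw [ModuleCat.mono_iff_injective] at h2
      exact h2
    let l : Y →ₗ[ℂ] V := f.hom.hom.hom
    have hl : ∀ g y, l (Y.ρ g y) = ρ g (l y) := fun g y =>
      congrArg (fun f : Y.V ⟶ (FDRep.of ρ).V => f.hom y) (f.comm g)
    rcases h (LinearMap.range l) (by rintro g _ ⟨y, rfl⟩; exact ⟨_, hl g y⟩) with h | h
    · exfalso
      apply h0
      ext y
      have : l y ∈ LinearMap.range l := ⟨y, rfl⟩
      rw [h] at this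
      exact this
    · have hs : Function.Surjective l := LinearMap.range_eq_top.1 h
      have : IsIso f.hom := by
        let e := LinearEquiv.ofBijective l ⟨hinj, hs⟩
        exact ⟨⟨FGModuleCat.ofHom e.symm.toLinearMap, by ext y; exact e.symm_apply_apply y,
          by ext y; exact e.apply_symm_apply y⟩⟩
      exact Action.isIso_of_hom_isIso f

theorem exists_good_maximal {G : Type} [Group G] [Finite G] (K : Subgroup G) [K.Normal]
    (hK : ¬ Group.IsNilpotent K) :
    ∃ M : Subgroup G, IsCoatom M ∧ M ⊔ K = ⊤ ∧
      ∀ T : Subgroup G, T.Normal → K ⊓ M ≤ T → M ⊔ T = ⊤ := by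
  rw [((Group.isNilpotent_of_finite_tfae (G := K)).out 0 3 rfl rfl : Group.IsNilpotent K ↔ _)] at hK
  push Not at hK
  obtain ⟨p, hp, P, hP⟩ := hK
  have hfr := Sylow.normalizer_sup_eq_top P
  set Q : Subgroup G := (P : Subgroup K).map K.subtype with hQ
  have hQK : Q ≤ K := Subgroup.map_subtype_le _
  have hne : Subgroup.normalizer (Q : Set G) ≠ ⊤ := by
    intro h
    have hn : Q.Normal := Subgroup.normalizer_eq_top_iff.1 h
    apply hP
    have : (P : Subgroup K) = Q.subgroupOf K := by
      rw [hQ, Subgroup.subgroupOf, Subgroup.comap_map_eq_self_of_injective]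
      exact K.subtype_injective
    rw [this]
    infer_instance
  obtain ⟨M, hM, hNM⟩ := (eq_top_or_exists_le_coatom (Subgroup.normalizer (Q : Set G))).resolve_left hne
  have hMK : M ⊔ K = ⊤ := by
    rw [eq_top_iff, ← hfr]
    exact sup_le_sup_right hNM _
  refine ⟨M, hM, hMK, fun T hT hKT => ?_⟩
  have hQM : Q ≤ M := le_trans Subgroup.le_normalizer hNM
  have hQT : Q ≤ T := le_trans (le_inf hQK hQM) hKT
  have hPT : (P : Subgroup K) ≤ T.subgroupOf K := by
    rw [Subgroup.subgroupOf, ← Subgroup.map_le_iff_le_comap]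
    exact hQT
  have h2 := Sylow.normalizer_sup_eq_top' P hPT
  have h3 : K ≤ M ⊔ T := by
    have h4 := congrArg (Subgroup.map K.subtype) h2
    rw [Subgroup.map_sup, ← MonoidHom.range_eq_map, Subgroup.range_subtype] at h4
    rw [← h4]
    apply sup_le_sup
    · refine le_trans (le_trans (Subgroup.le_normalizer_map _) ?_) hNM
      exact le_rfl
    · rw [Subgroup.subgroupOf_map_subtype]
      exact inf_le_left
  rw [eq_top_iff, ← hMK]
  exact sup_le le_sup_left h3

theorem mem_charKer {G : Type} [Group G] (V : FDRep ℂ G) (g : G) :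
    g ∈ charKer V ↔ V.ρ g = 1 := by
  unfold charKer
  rw [MonoidHom.mem_ker, Units.ext_iff]
  rfl

theorem charKer_index {G : Type} [Group G] (V : FDRep ℂ G) :
    (charKer V).index = Nat.card (Set.range V.ρ) := by
  unfold charKer
  rw [Subgroup.index_ker]
  refine Nat.card_congr ⟨fun x => ⟨x.1.1, ?_⟩, fun y => ⟨Representation.asGroupHom V.ρ y.2.choose, ⟨_, rfl⟩⟩, ?_, ?_⟩
  · obtain ⟨x, g, rfl⟩ := x
    exact ⟨g, rfl⟩
  · rintro ⟨x, g, rfl⟩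
    ext1
    apply Units.ext
    have : ∃ h, V.ρ h = V.ρ g := ⟨g, rfl⟩
    exact this.choose_spec
  · rintro ⟨y, g, rfl⟩
    ext1
    have : ∃ h, V.ρ h = V.ρ g := ⟨g, rfl⟩
    exact this.choose_spec

theorem exists_min_sub {G W : Type} [Group G] [AddCommGroup W] [Module ℂ W]
    [FiniteDimensional ℂ W] (σ : Representation ℂ G W) (W₀ : Submodule ℂ W)
    (h₀ : ∀ g, ∀ v ∈ W₀, σ g v ∈ W₀) (hne : W₀ ≠ ⊥) :
    ∃ (S : Submodule ℂ W) (τ : Representation ℂ G S), S ≤ W₀ ∧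
      (∀ g (v : S), (τ g v : W) = σ g v) ∧ ElIrr τ := by
  obtain ⟨S, ⟨hS1, hS2, hS3⟩, hmin⟩ := (wellFounded_lt (α := Submodule ℂ W)).has_min
    {S | S ≤ W₀ ∧ S ≠ ⊥ ∧ ∀ g, ∀ v ∈ S, σ g v ∈ S} ⟨W₀, le_rfl, hne, h₀⟩
  let τ : Representation ℂ G S :=
    { toFun := fun g => (σ g).restrict (hS3 g)
      map_one' := by ext; simp
      map_mul' := by intros; ext; simp }
  refine ⟨S, τ, hS1, fun _ _ => rfl, (Submodule.nontrivial_iff_ne_bot).2 hS2, fun T hT => ?_⟩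
  by_cases hb : T = ⊥
  · exact Or.inl hb
  right
  have hle : T.map S.subtype ≤ S := Submodule.map_subtype_le _ _
  have hnb : T.map S.subtype ≠ ⊥ := by
    intro h
    apply hb
    apply Submodule.map_injective_of_injective S.subtype_injective
    rw [h, Submodule.map_bot]
  have heq : T.map S.subtype = S := by
    by_contra hc
    refine hmin _ ⟨hle.trans hS1, hnb, ?_⟩ (lt_of_le_of_ne hle hc)
    rintro g _ ⟨t, ht, rfl⟩
    exact ⟨τ g t, hT g t ht, rfl⟩
  rw [eq_top_iff]
  rintro ⟨x, hx⟩ _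
  rw [← heq] at hx
  obtain ⟨t, ht, hte⟩ := hx
  have : t = ⟨x, by assumption⟩ := Subtype.ext hte
  exact this ▸ ht

theorem arith (a b c d n : ℕ) (hb : 0 < b) (hd : 0 < d) (h1 : a * n ≤ c)
    (h2 : d + b ≤ n * b) (h3 : d * d ≤ c) : a / b < c / d := by
  rw [← Nat.succ_le_iff, Nat.le_div_iff_mul_le hd]
  set q := a / b with hq
  have hqb : q * b ≤ a := Nat.div_mul_le_self a b
  rcases le_or_gt (q + 1) d with h | h
  · exact le_trans (Nat.mul_le_mul_right d h) h3
  · have h4 : q * (d + b) ≤ q * (n * b) := Nat.mul_le_mul_left q h2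
    have h5 : n * (q * b) ≤ n * a := Nat.mul_le_mul_left n hqb
    have h6 : q * 1 ≤ q * b := Nat.mul_le_mul_left q hb
    have : q.succ * d = q * d + d := by rw [Nat.succ_mul]
    nlinarith

/-- The representation on functions `G ⧸ M → V`. -/
def funRep {G V : Type} [Group G] [AddCommGroup V] [Module ℂ V] (ρ : Representation ℂ G V)
    (M : Subgroup G) : Representation ℂ G (G ⧸ M → V) where
  toFun g :=
    { toFun := fun f x => ρ g (f (g⁻¹ • x))
      map_add' := by intros; ext; simp
      map_smul' := by intros; ext; simp }
  map_one' := by ext; simp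
  map_mul' := by intros; ext; simp [mul_smul]

theorem funRep_apply {G V : Type} [Group G] [AddCommGroup V] [Module ℂ V]
    (ρ : Representation ℂ G V) (M : Subgroup G) (g : G) (f : G ⧸ M → V) (x : G ⧸ M) :
    funRep ρ M g f x = ρ g (f (g⁻¹ • x)) := rfl

theorem stmt_6 {G : Type} [Group G] [Finite G] (χ : FDRep ℂ G) (hχ : Simple χ)
    (F : Subgroup G)
    (hF : IsGreatest {N : Subgroup G | N.Normal ∧ Group.IsNilpotent ↥N} F)
    (hK : ¬ charKer χ ≤ F) :
    ∃ ξ : FDRep ℂ G, Simple ξ ∧ charKer ξ < charKer χ ∧ codeg χ < codeg ξ := by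
  classical
  have hKn : (charKer χ).Normal := by unfold charKer; infer_instance
  have hnil : ¬ Group.IsNilpotent (charKer χ) := fun h => hK (hF.2 ⟨hKn, h⟩)
  obtain ⟨M, hM, hMK, hT⟩ := exists_good_maximal (charKer χ) hnil
  have hirr := elIrr_of_simple χ hχ
  have hVn : Nontrivial χ := hirr.1
  have := Fintype.ofFinite (G ⧸ M)
  set n := M.index with hn
  have hcard : Fintype.card (G ⧸ M) = n := by rw [hn, Subgroup.index, Nat.card_eq_fintype_card]
  have hn1 : n ≠ 1 := fun h => hM.1 (Subgroup.index_eq_one.1 h)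
  have hn0 : n ≠ 0 := Subgroup.index_ne_zero_of_finite
  set b := Module.finrank ℂ χ with hb
  have hb0 : 0 < b := Module.finrank_pos
  let ρ : Representation ℂ G χ := χ.ρ
  -- the sum map
  let s : (G ⧸ M → χ) →ₗ[ℂ] χ := ∑ x : G ⧸ M, LinearMap.proj x
  have hs : ∀ f, s f = ∑ x : G ⧸ M, f x := fun f => by simp [s]
  have hsurj : LinearMap.range s = ⊤ := by
    rw [LinearMap.range_eq_top]
    intro v
    refine ⟨Pi.single ((1 : G) : G ⧸ M) v, ?_⟩
    rw [hs]
    simp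
  have hdim : b + Module.finrank ℂ (LinearMap.ker s) = n * b := by
    have h1 := LinearMap.finrank_range_add_finrank_ker s
    rw [hsurj, finrank_top, Module.finrank_pi_fintype] at h1
    simpa [hcard] using h1
  have hne : LinearMap.ker s ≠ ⊥ := by
    intro h
    rw [h, finrank_bot] at hdim
    apply hn1
    have : 1 * b = n * b := by omega
    exact (Nat.eq_of_mul_eq_mul_right hb0 this).symm
  have hinv : ∀ g, ∀ f ∈ LinearMap.ker s, funRep ρ M g f ∈ LinearMap.ker s := by
    intro g f hf
    rw [LinearMap.mem_ker, hs] at hf ⊢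
    simp only [funRep_apply]
    rw [← map_sum, (MulAction.bijective (g⁻¹) (β := G ⧸ M)).sum_comp f, hf, map_zero]
  obtain ⟨S, τ, hS, hτ, hτirr⟩ := exists_min_sub (funRep ρ M) (LinearMap.ker s) hinv hne
  have hSn : Nontrivial S := hτirr.1
  set ξ : FDRep ℂ G := FDRep.of τ with hξ
  have hmemξ : ∀ g, g ∈ charKer ξ ↔ τ g = 1 := mem_charKer ξ
  have hmemχ : ∀ g, g ∈ charKer χ ↔ ρ g = 1 := mem_charKer χ
  have hLn : (charKer ξ).Normal := by unfold charKer; infer_instance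
  -- evaluation at the base point
  let e : S →ₗ[ℂ] χ := (LinearMap.proj ((1 : G) : G ⧸ M)).comp S.subtype
  have he : ∀ f : S, e f = (f : G ⧸ M → χ) ((1 : G) : G ⧸ M) := fun _ => rfl
  have hcoset : ∀ (f : S) (g : G), (f : G ⧸ M → χ) (g : G ⧸ M) = ρ g (e (τ g⁻¹ f)) := by
    intro f g
    rw [he, hτ, funRep_apply, ← Module.End.mul_apply, ← map_mul]
    simp
  have heM : ∀ m ∈ M, ∀ f : S, e (τ m f) = ρ m (e f) := by
    intro m hm f
    rw [he, hτ, funRep_apply, he]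
    congr 2
    refine congrArg (f : G ⧸ M → χ) ?_
    change ((m⁻¹ * 1 : G) : G ⧸ M) = _
    rw [QuotientGroup.eq]
    simpa using hm
  have hene : ∀ f : S, (∀ g, e (τ g f) = 0) → f = 0 := by
    intro f hf
    ext x
    obtain ⟨g, rfl⟩ := QuotientGroup.mk_surjective x
    rw [hcoset, hf, map_zero]; rfl
  -- `G = M K`
  have hdecomp : ∀ (T : Subgroup G), T.Normal → M ⊔ T = ⊤ → ∀ g : G, ∃ m ∈ M, ∃ t ∈ T, m * t = g := by
    intro T hTn h g
    have : g ∈ M ⊔ T := h ▸ Subgroup.mem_top g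
    exact Subgroup.mem_sup_of_normal_right.1 this
  have hesurj : LinearMap.range e = ⊤ := by
    refine (hirr.2 (LinearMap.range e) ?_).resolve_left ?_
    · rintro g _ ⟨f, rfl⟩
      obtain ⟨m, hm, k, hk, rfl⟩ := hdecomp _ hKn hMK g
      refine ⟨τ m f, ?_⟩
      rw [heM m hm, map_mul, (mem_charKer χ k).1 hk, mul_one]
    · intro h
      obtain ⟨f, hf⟩ := exists_ne (0 : S)
      refine hf (hene f fun g => ?_)
      have : e (τ g f) ∈ LinearMap.range e := ⟨_, rfl⟩
      rw [h] at this
      exact this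
  have hLM : charKer ξ ⊓ M ≤ charKer χ := by
    rintro g ⟨hg1, hg2⟩
    rw [hmemχ]
    ext v
    obtain ⟨f, rfl⟩ := LinearMap.range_eq_top.1 hesurj v
    rw [← heM g hg2, (hmemξ g).1 hg1]; rfl
  have hL : charKer ξ ≤ M := by
    by_contra hLM'
    have htop : M ⊔ charKer ξ = ⊤ := hM.2 _ (lt_of_le_of_ne le_sup_left
      fun h => hLM' (h ▸ le_sup_right))
    have hinj : LinearMap.ker e = ⊥ := by
      refine (hτirr.2 (LinearMap.ker e) ?_).resolve_right ?_
      · intro g f hf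
        obtain ⟨m, hm, l, hl, rfl⟩ := hdecomp _ hLn htop g
        rw [LinearMap.mem_ker] at hf ⊢
        rw [map_mul, (hmemξ l).1 hl, mul_one, heM m hm, hf, map_zero]
      · intro h
        obtain ⟨v, hv⟩ := exists_ne (0 : χ)
        obtain ⟨f, rfl⟩ := LinearMap.range_eq_top.1 hesurj v
        have : f ∈ LinearMap.ker e := h ▸ Submodule.mem_top
        exact hv this
    have hsub : charKer χ ⊓ M ≤ charKer ξ := by
      rintro g ⟨hg1, hg2⟩
      rw [hmemξ]
      refine LinearMap.ext fun f => LinearMap.ker_eq_bot.1 hinj ?_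
      rw [heM g hg2, (hmemχ g).1 hg1]; rfl
    have hT' := hT (charKer χ ⊓ charKer ξ) inferInstance (le_inf inf_le_left hsub)
    have hequiv : ∀ g (f : S), e (τ g f) = ρ g (e f) := by
      intro g f
      obtain ⟨m, hm, t, ht, rfl⟩ := hdecomp _ inferInstance hT' g
      rw [map_mul, map_mul, (hmemξ t).1 ht.2, (hmemχ t).1 ht.1, mul_one, mul_one, heM m hm]
    obtain ⟨f, hf⟩ := exists_ne (0 : S)
    have hconst : ∀ x, (f : G ⧸ M → χ) x = e f := by
      intro x
      obtain ⟨g, rfl⟩ := QuotientGroup.mk_surjective x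
      rw [hcoset, hequiv, ← Module.End.mul_apply, ← map_mul]
      simp
    have hsum : s f = 0 := hS f.2
    rw [hs, Finset.sum_congr rfl (fun x _ => hconst x), Finset.sum_const, Finset.card_univ,
      hcard, ← Nat.cast_smul_eq_nsmul ℂ, smul_eq_zero] at hsum
    rcases hsum with h | h
    · exact hn0 (by exact_mod_cast h)
    · exact hf (LinearMap.ker_eq_bot.1 hinj (by rw [h, map_zero]))
  have hLK : charKer ξ ≤ charKer χ := fun g hg => hLM ⟨hg, hL hg⟩
  have hKM : ¬ charKer χ ≤ M := fun h => hM.1 (by rw [← hMK, sup_eq_left.2 h])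
  refine ⟨ξ, simple_of_elIrr hτirr, lt_of_le_of_ne hLK fun h => hKM (h ▸ hL), ?_⟩
  unfold codeg
  have hfin : Module.finrank ℂ ξ = Module.finrank ℂ S := rfl
  refine arith _ _ _ _ n hb0 (by rw [hfin]; exact Module.finrank_pos) ?_ ?_ ?_
  · have h1 : (charKer χ ⊓ M).index = (charKer χ).index * n := by
      rw [← Subgroup.relIndex_mul_index (inf_le_right : charKer χ ⊓ M ≤ M),
        Subgroup.inf_relIndex_right, ← Subgroup.relIndex_sup_right, hMK, Subgroup.relIndex_top_right]
    rw [← h1]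
    exact Nat.le_of_dvd (Nat.pos_of_ne_zero Subgroup.index_ne_zero_of_finite)
      (Subgroup.index_dvd_of_le (le_inf hLK hL))
  · have := Submodule.finrank_mono hS
    rw [hfin, ← hb]; omega
  · rw [charKer_index]
    exact hτirr.finrank_sq_le
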